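/- Let v be a smooth nowhere-zero vector field on an open set U ⊆ ℝ³ admitting a smooth Serret–Frenet frame, i.e., smooth vector fields (t, n, b) forming a right-handed orthonormal frame at every point of U with t = v/‖v‖. Then every point x₀ ∈ U has an open neighborhood V ⊆ U on which there exist two smooth vector fields J₁ and J₂ such that: J₁ and J₂ are pointwise linearly independent on V, J₁·v = 0 and J₂·v = 0 on V, each satisfies the Jacobi identity J_i·(curl J_i) = 0 on V, and they are compatible: J₁·(curl J₂) + J₂·(curl J₁) = 0 on V. -/

import Mathlib

/-!
The Poisson vectors are the gradients of two functionally independent local first integrals of `v`: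
gradients are orthogonal to `v` exactly when the functions are constant along `v`, and they are
curl-free, so that the Jacobi identities and compatibility hold trivially. First integrals are
linear functionals vanishing on `v x₀`, read in coordinates that straighten `v`, and straightening
is done by the flow of `v` out of a hyperplane transverse to `v x₀`.

The point is that the flow is as smooth as `v`. After rescaling time to the unit interval, the
solution with speed `ε` and starting point `x` is a zero `γ` of `γ - x - ε ∫ v ∘ γ` in the space of
paths `C([0, 1], E)`, where the superposition operator `γ ↦ v ∘ γ` is as smooth as `v`. At `ε = 0`
the derivative in `γ` is the identity, so the implicit function theorem yields `γ` as a smooth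
function of `(ε, x)`, and `γ(1)` is the flow at time `ε`. That `∂γ(1)/∂ε = v(γ(1))` holds because
`s ↦ s v(γ(s))` satisfies the linearized equation, whose solution is unique.
-/

noncomputable section

/-- Three-dimensional Euclidean space. -/
abbrev E3 : Type := EuclideanSpace ℝ (Fin 3)

/-- The Euclidean dot product on ℝ³. -/
def dot (u v : E3) : ℝ := ∑ i, u i * v i

/-- The cross product on ℝ³. -/
def cross (u v : E3) : E3 :=
  (WithLp.equiv 2 (Fin 3 → ℝ)).symm
    ![u 1 * v 2 - u 2 * v 1, u 2 * v 0 - u 0 * v 2, u 0 * v 1 - u 1 * v 0]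

/-- Partial derivative of a scalar function in the `i`-th coordinate direction. -/
def pd (i : Fin 3) (f : E3 → ℝ) (x : E3) : ℝ :=
  fderiv ℝ f x (EuclideanSpace.single i 1)

/-- The gradient ∇f of a scalar function. -/
def grad (f : E3 → ℝ) (x : E3) : E3 :=
  (WithLp.equiv 2 (Fin 3 → ℝ)).symm ![pd 0 f x, pd 1 f x, pd 2 f x]

/-- The curl ∇×F of a vector field. -/
def curl (F : E3 → E3) (x : E3) : E3 :=
  (WithLp.equiv 2 (Fin 3 → ℝ)).symm
    ![pd 1 (fun y => F y 2) x - pd 2 (fun y => F y 1) x,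
      pd 2 (fun y => F y 0) x - pd 0 (fun y => F y 2) x,
      pd 0 (fun y => F y 1) x - pd 1 (fun y => F y 0) x]

/-- Directional derivative ∂ₛ f = t·∇f of a scalar function along a vector field t. -/
def ds (t : E3 → E3) (f : E3 → ℝ) (x : E3) : ℝ := dot (t x) (grad f x)

/-- Componentwise directional derivative (u·∇)w of a vector field w along u. -/
def dirDeriv (u w : E3 → E3) (x : E3) : E3 :=
  (WithLp.equiv 2 (Fin 3 → ℝ)).symm
    ![fderiv ℝ (fun y => w y 0) x (u x),
      fderiv ℝ (fun y => w y 1) x (u x),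
      fderiv ℝ (fun y => w y 2) x (u x)]

/-- Helicity density w·(curl w) of a vector field. -/
def hel (w : E3 → E3) (x : E3) : ℝ := dot (w x) (curl w x)

/-- Cross-helicity sum n·(curl b) + b·(curl n). -/
def crossHel (n b : E3 → E3) (x : E3) : ℝ :=
  dot (n x) (curl b x) + dot (b x) (curl n x)

/-- A smooth right-handed orthonormal (Serret–Frenet type) frame on U. -/
def IsFrameOn (t n b : E3 → E3) (U : Set E3) : Prop :=
  ContDiffOn ℝ (⊤ : ℕ∞) t U ∧ ContDiffOn ℝ (⊤ : ℕ∞) n U ∧ ContDiffOn ℝ (⊤ : ℕ∞) b U ∧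
  ∀ x ∈ U, ‖t x‖ = 1 ∧ ‖n x‖ = 1 ∧ ‖b x‖ = 1 ∧
    dot (t x) (n x) = 0 ∧ dot (t x) (b x) = 0 ∧ dot (n x) (b x) = 0 ∧
    b x = cross (t x) (n x)

open Filter Set Topology
open scoped unitInterval

section InverseFunction

theorem eventually_isInvertible {X 𝕜 E F : Type*} [TopologicalSpace X]
    [NontriviallyNormedField 𝕜] [NormedAddCommGroup E] [NormedSpace 𝕜 E] [CompleteSpace E]
    [NormedAddCommGroup F] [NormedSpace 𝕜 F] {T : X → E →L[𝕜] F} {a : X}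
    (hT : ContinuousAt T a) (ha : (T a).IsInvertible) : ∀ᶠ x in 𝓝 a, (T x).IsInvertible :=
  hT (ContinuousLinearEquiv.isOpen.mem_nhds ha)

variable {𝕜 : Type*} [RCLike 𝕜] {n : WithTop ℕ∞}
variable {E F G : Type*} [NormedAddCommGroup E] [NormedSpace 𝕜 E] [CompleteSpace E]
  [NormedAddCommGroup F] [NormedSpace 𝕜 F] [NormedAddCommGroup G] [NormedSpace 𝕜 G]

-- At `n = ∞`, smoothness at the base point alone would not give a neighbourhood of smoothness.
theorem exists_localInverse_eventually_contDiffAt {f : E → G} {a : E} (hn : n ≠ 0)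
    (hf : ∀ᶠ x in 𝓝 a, ContDiffAt 𝕜 n f x) (ha : (fderiv 𝕜 f a).IsInvertible) :
    ∃ g : G → E, Tendsto g (𝓝 (f a)) (𝓝 a) ∧
      ∀ᶠ y in 𝓝 (f a), ContDiffAt 𝕜 n g y ∧ f (g y) = y ∧
        ∃ A : E ≃L[𝕜] G, HasFDerivAt f (A : E →L[𝕜] G) (g y) ∧
          HasFDerivAt g (A.symm : G →L[𝕜] E) y := by
  have hfa : ContDiffAt 𝕜 n f a := hf.self_of_nhds
  obtain ⟨A₀, hA₀⟩ := ha
  let e := hfa.toOpenPartialHomeomorph f (hA₀ ▸ (hfa.differentiableAt hn).hasFDerivAt) hn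
  have hae : a ∈ e.source := hfa.mem_toOpenPartialHomeomorph_source _ hn
  have hcont : ContinuousAt (fderiv 𝕜 f) a :=
    (hfa.fderiv_right (m := 0) (by simpa using ENat.one_le_iff_ne_zero_withTop.2 hn)).continuousAt
  have hinv := eventually_isInvertible hcont ⟨A₀, hA₀⟩
  refine ⟨e.symm, e.tendsto_symm hae, ?_⟩
  filter_upwards [e.open_target.mem_nhds (e.map_source hae),
    (e.tendsto_symm hae).eventually (hf.and hinv)] with y hy ⟨hfy, A, hA⟩
  have hfA : HasFDerivAt e (A : E →L[𝕜] G) (e.symm y) :=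
    hA ▸ (hfy.differentiableAt hn).hasFDerivAt
  exact ⟨e.contDiffAt_symm hy hfA hfy, e.right_inv hy, A, hfA, e.hasFDerivAt_symm hy hfA⟩

theorem exists_implicitFunction_eventually_contDiffAt [CompleteSpace F] [CompleteSpace G]
    {f : E × F → G} {u : E × F} (hn : n ≠ 0) (hf : ∀ᶠ p in 𝓝 u, ContDiffAt 𝕜 n f p)
    (hu : (fderiv 𝕜 f u ∘L .inr 𝕜 E F).IsInvertible) :
    ∃ ψ : E → F, ψ u.1 = u.2 ∧ ∀ᶠ x in 𝓝 u.1, ContDiffAt 𝕜 n ψ x ∧ f (x, ψ x) = f u ∧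
      (fderiv 𝕜 f (x, ψ x) ∘L .inr 𝕜 E F).IsInvertible := by
  have hfu : ContDiffAt 𝕜 n f u := hf.self_of_nhds
  let ψ := hfu.implicitFunction hn hu
  have hψu : ψ u.1 = u.2 := hfu.implicitFunction_apply_self hn hu
  have hgraph : Tendsto (fun x => (x, ψ x)) (𝓝 u.1) (𝓝 u) := by
    have := (continuousAt_id (x := u.1)).prodMk
      (hfu.contDiffAt_implicitFunction hn hu).continuousAt
    rwa [ContinuousAt, id, show hfu.implicitFunction hn hu u.1 = u.2 from hψu] at this
  have hcont : ContinuousAt (fun p => fderiv 𝕜 f p ∘L .inr 𝕜 E F) u :=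
    (hfu.fderiv_right (m := 0)
      (by simpa using ENat.one_le_iff_ne_zero_withTop.2 hn)).continuousAt.clm_comp
        continuousAt_const
  refine ⟨ψ, hψu, ?_⟩
  filter_upwards [hgraph.eventually hf, hgraph.eventually (eventually_isInvertible hcont hu),
    hgraph.eventually (hfu.eventually_apply_eq_iff_implicitFunction hn hu).eventually_nhds,
    hfu.eventually_apply_implicitFunction hn hu] with x hfx hinv hiff hx
  refine ⟨?_, hx, hinv⟩
  -- By local uniqueness, `ψ` is also the implicit function based at `(x, ψ x)`.
  have hφ : Tendsto (fun y => (y, hfx.implicitFunction hn hinv y)) (𝓝 x) (𝓝 (x, ψ x)) := by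
    have := (continuousAt_id (x := x)).prodMk
      (hfx.contDiffAt_implicitFunction hn hinv).continuousAt
    rwa [ContinuousAt, id, hfx.implicitFunction_apply_self hn hinv] at this
  refine (hfx.contDiffAt_implicitFunction hn hinv).congr_of_eventuallyEq ?_
  filter_upwards [hφ.eventually hiff, hfx.eventually_apply_implicitFunction hn hinv] with y hy hy'
  exact hy.1 (hy'.trans hx)

end InverseFunction

section Superposition

universe u

variable {K : Type*} [TopologicalSpace K] [CompactSpace K]
variable {E F : Type u} [NormedAddCommGroup E] [NormedSpace ℝ E]
  [NormedAddCommGroup F] [NormedSpace ℝ F]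

variable (K E F) in
/-- Pointwise evaluation `(A h)(s) = A(s) h(s)` of a continuous family of operators on a continuous
family of vectors, as a continuous bilinear map. -/
def pointwiseApply : C(K, E →L[ℝ] F) →L[ℝ] C(K, E) →L[ℝ] C(K, F) :=
  LinearMap.mkContinuous₂
    (LinearMap.mk₂ ℝ
      (fun (A : C(K, E →L[ℝ] F)) (h : C(K, E)) =>
        (⟨fun s => A s (h s), A.continuous.clm_apply h.continuous⟩ : C(K, F)))
      (fun A A' h => by ext s; simp) (fun c A h => by ext s; simp)
      (fun A h h' => by ext s; simp) (fun c A h => by ext s; simp)) 1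
    (fun A h => by
      rw [ContinuousMap.norm_le _ (by positivity), one_mul]
      exact fun s => (A s).le_of_opNorm_le_of_le (A.norm_coe_le_norm s) (h.norm_coe_le_norm s))

@[simp]
theorem pointwiseApply_apply (A : C(K, E →L[ℝ] F)) (h : C(K, E)) (s : K) :
    pointwiseApply K E F A h s = A s (h s) := rfl

/-- The derivative of a `C¹` map, bundled as a continuous map. -/
def fderivMap (f : C(E, F)) (hf : ContDiff ℝ 1 f) : C(E, E →L[ℝ] F) :=
  ⟨fderiv ℝ f, hf.continuous_fderiv one_ne_zero⟩

@[simp]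
theorem fderivMap_apply (f : C(E, F)) (hf : ContDiff ℝ 1 f) (x : E) :
    fderivMap f hf x = fderiv ℝ f x := rfl

theorem hasFDerivAt_superposition {f : C(E, F)} (hf : ContDiff ℝ 1 f) (γ : C(K, E)) :
    HasFDerivAt (fun γ : C(K, E) => f.comp γ)
      (pointwiseApply K E F ((fderivMap f hf).comp γ)) γ := by
  rw [hasFDerivAt_iff_isLittleO, Asymptotics.isLittleO_iff]
  intro c hc
  -- Near the compact range of `γ`, the derivative of `f` is uniformly close to its values on it.
  have hunif := (isCompact_range γ.continuous).uniformContinuousAt_of_continuousAt (fderiv ℝ f)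
    (fun x _ => (fderivMap f hf).continuous.continuousAt) (Metric.dist_mem_uniformity hc)
  obtain ⟨δ, hδ, hfδ⟩ := Metric.mem_uniformity_dist.1 hunif
  filter_upwards [Metric.ball_mem_nhds γ hδ] with η hη
  rw [ContinuousMap.norm_le _ (by positivity)]
  intro s
  have hηs : η s ∈ Metric.ball (γ s) δ := (ContinuousMap.dist_apply_le_dist s).trans_lt hη
  have hclose : ∀ x ∈ Metric.ball (γ s) δ, ‖fderiv ℝ f x - fderiv ℝ f (γ s)‖ ≤ c := by
    intro x hx
    rw [← dist_eq_norm, dist_comm]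
    exact (hfδ (Metric.mem_ball'.1 hx) ⟨s, rfl⟩).le
  calc ‖f (η s) - f (γ s) - fderiv ℝ f (γ s) (η s - γ s)‖
      ≤ c * ‖η s - γ s‖ := (convex_ball (γ s) δ).norm_image_sub_le_of_norm_fderiv_le'
        (fun x _ => hf.differentiable one_ne_zero x) hclose (Metric.mem_ball_self hδ) hηs
    _ ≤ c * ‖η - γ‖ := by gcongr; exact (η - γ).norm_coe_le_norm s

theorem contDiff_superposition_nat {n : ℕ} {f : C(E, F)} (hf : ContDiff ℝ n f) :
    ContDiff ℝ n (fun γ : C(K, E) => f.comp γ) := by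
  induction n generalizing F with
  | zero => exact contDiff_zero.2 (ContinuousMap.continuous_postcomp f)
  | succ n ih =>
    have hf₁ : ContDiff ℝ 1 f := hf.of_le (by simp)
    have hf' : ContDiff ℝ n (fderivMap f hf₁) := hf.fderiv_right (by simp)
    have happly : ContDiff ℝ n (pointwiseApply K E F) := by fun_prop
    have hderiv : ContDiff ℝ n fun γ : C(K, E) => pointwiseApply K E F ((fderivMap f hf₁).comp γ) :=
      happly.comp (ih hf')
    exact contDiff_succ_iff_hasFDerivAt.2 ⟨_, hderiv, hasFDerivAt_superposition hf₁⟩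

theorem contDiff_superposition {n : ℕ∞} {f : C(E, F)} (hf : ContDiff ℝ n f) :
    ContDiff ℝ n (fun γ : C(K, E) => f.comp γ) :=
  contDiff_iff_forall_nat_le.2 fun _ hm =>
    contDiff_superposition_nat (hf.of_le (mod_cast hm))

end Superposition

section Flow

variable {E : Type*} [NormedAddCommGroup E] [NormedSpace ℝ E]

variable (E) in
/-- The operator `γ ↦ (s ↦ ∫₀ˢ γ)` on paths over the unit interval. -/
def primitive : C(I, E) →L[ℝ] C(I, E) :=
  have hint (γ : C(I, E)) (a b : ℝ) :
      IntervalIntegrable (IccExtend zero_le_one γ) MeasureTheory.volume a b :=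
    γ.continuous.Icc_extend'.intervalIntegrable a b
  LinearMap.mkContinuous
    { toFun := fun γ => ⟨fun s => ∫ τ in (0 : ℝ)..s, IccExtend zero_le_one γ τ,
        (intervalIntegral.continuous_primitive (hint γ) 0).comp continuous_subtype_val⟩
      map_add' := fun γ η => by
        ext s
        exact intervalIntegral.integral_add (hint γ _ _) (hint η _ _)
      map_smul' := fun c γ => by
        ext s
        exact intervalIntegral.integral_smul c (IccExtend zero_le_one γ) } 1
    (fun γ => by
      rw [ContinuousMap.norm_le _ (by positivity), one_mul]
      intro s
      refine (intervalIntegral.norm_integral_le_of_norm_le_const (C := ‖γ‖)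
        (fun τ _ => γ.norm_coe_le_norm _)).trans ?_
      rw [sub_zero, abs_of_nonneg s.2.1]
      exact mul_le_of_le_one_right (norm_nonneg _) s.2.2)

theorem primitive_apply (γ : C(I, E)) (s : I) :
    primitive E γ s = ∫ τ in (0 : ℝ)..s, IccExtend zero_le_one γ τ := rfl

theorem IccExtend_eventuallyEq {α : Type*} {γ : I → α} {f : ℝ → α} (hf : ∀ τ : I, γ τ = f τ)
    {s : ℝ} (hs : s ∈ Ioo (0 : ℝ) 1) : IccExtend zero_le_one γ =ᶠ[𝓝 s] f := by
  filter_upwards [Ioo_mem_nhds hs.1 hs.2] with τ hτ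
  exact (IccExtend_of_mem _ _ (Ioo_subset_Icc_self hτ)).trans (hf _)

theorem hasDerivAt_primitive [CompleteSpace E] (γ : C(I, E)) {s : ℝ} (hs : s ∈ Ioo (0 : ℝ) 1) :
    HasDerivAt (IccExtend zero_le_one (primitive E γ)) (IccExtend zero_le_one γ s) s := by
  have hγ : Continuous (IccExtend zero_le_one γ) := γ.continuous.Icc_extend'
  refine (hγ.integral_hasStrictDerivAt 0 s).hasDerivAt.congr_of_eventuallyEq ?_
  exact IccExtend_eventuallyEq (primitive_apply γ) hs

theorem primitive_eq_of_hasDerivAt [CompleteSpace E] {γ η : C(I, E)} (hη₀ : η 0 = 0)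
    (hη : ∀ s ∈ Ioo (0 : ℝ) 1,
      HasDerivAt (IccExtend zero_le_one η) (IccExtend zero_le_one γ s) s) :
    primitive E γ = η := by
  ext s
  rw [primitive_apply, intervalIntegral.integral_eq_sub_of_hasDerivAt_of_le s.2.1
    η.continuous.Icc_extend'.continuousOn (fun τ hτ => hη τ ⟨hτ.1, hτ.2.trans_le s.2.2⟩)
    (γ.continuous.Icc_extend'.intervalIntegrable _ _), IccExtend_left, IccExtend_val]
  exact (congrArg (η s - ·) hη₀).trans (sub_zero _)

/-- The defect `γ - x - ε ∫ v ∘ γ` of a path `γ` in the integral equation of the curves starting at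
`x` that solve `γ' = ε v(γ)`, as a function of `((ε, x), γ)`. -/
def picardDefect (v : C(E, E)) (p : (ℝ × E) × C(I, E)) : C(I, E) :=
  p.2 - ContinuousLinearMap.const ℝ I p.1.2 - p.1.1 • primitive E (v.comp p.2)

theorem contDiff_picardDefect {n : ℕ∞} {v : C(E, E)} (hv : ContDiff ℝ n v) :
    ContDiff ℝ n (picardDefect v) := by
  have hcomp : ContDiff ℝ n fun p : (ℝ × E) × C(I, E) => v.comp p.2 :=
    (contDiff_superposition hv).comp contDiff_snd
  unfold picardDefect
  fun_prop

theorem fderiv_picardDefect_apply {v : C(E, E)} (hv : ContDiff ℝ 1 v)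
    (p w : (ℝ × E) × C(I, E)) :
    fderiv ℝ (picardDefect v) p w = w.2 - ContinuousLinearMap.const ℝ I w.1.2 -
      (p.1.1 • primitive E (pointwiseApply I E E ((fderivMap v hv).comp p.2) w.2) +
        w.1.1 • primitive E (v.comp p.2)) := by
  have hfst := hasFDerivAt_fst (𝕜 := ℝ) (p := p)
  have hγ := hasFDerivAt_snd (𝕜 := ℝ) (p := p)
  have hε := (hasFDerivAt_fst (𝕜 := ℝ) (p := p.1)).comp p hfst
  have hx := (hasFDerivAt_snd (𝕜 := ℝ) (p := p.1)).comp p hfst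
  have hconst := (ContinuousLinearMap.const ℝ I).hasFDerivAt.comp p hx
  have hint := (primitive E).hasFDerivAt.comp p ((hasFDerivAt_superposition hv p.2).comp p hγ)
  have h : HasFDerivAt (picardDefect v) _ p := (hγ.sub hconst).sub (hε.smul hint)
  rw [h.fderiv]
  rfl

theorem fderiv_picardDefect_comp_inr {v : C(E, E)} (hv : ContDiff ℝ 1 v) (x : E) (γ : C(I, E)) :
    fderiv ℝ (picardDefect v) ((0, x), γ) ∘L .inr ℝ (ℝ × E) C(I, E) = .id ℝ C(I, E) := by
  ext1 w
  simp [fderiv_picardDefect_apply hv]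

theorem hasDerivAt_of_picardDefect_eq_zero [CompleteSpace E] {v : C(E, E)}
    {p : (ℝ × E) × C(I, E)} (hp : picardDefect v p = 0) {s : ℝ} (hs : s ∈ Ioo (0 : ℝ) 1) :
    HasDerivAt (IccExtend zero_le_one p.2) (p.1.1 • v (IccExtend zero_le_one p.2 s)) s := by
  have hγ : p.2 = ContinuousLinearMap.const ℝ I p.1.2 + p.1.1 • primitive E (v.comp p.2) :=
    sub_eq_zero.1 ((sub_sub _ _ _).symm.trans hp)
  have hderiv := ((hasDerivAt_primitive (v.comp p.2) hs).const_smul p.1.1).const_add p.1.2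
  exact hderiv.congr_of_eventuallyEq (.of_eq (congrArg (fun γ : C(I, E) => IccExtend _ γ) hγ))

/-- The path `s ↦ s v(γ(s))`: when `γ` solves `γ' = ε v(γ)`, it is the derivative of `γ` with
respect to the speed `ε`. -/
def speedVariation (v : C(E, E)) (γ : C(I, E)) : C(I, E) :=
  ⟨fun s => (s : ℝ) • v (γ s), by fun_prop⟩

-- Both sides of `γ = x + ε ∫ v ∘ γ` are differentiated in `ε`.
theorem fderiv_picardDefect_speedVariation [CompleteSpace E] {v : C(E, E)} (hv : ContDiff ℝ 1 v)
    {p : (ℝ × E) × C(I, E)} (hp : picardDefect v p = 0) :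
    fderiv ℝ (picardDefect v) p ((1, 0), speedVariation v p.2) = 0 := by
  have hprim : primitive E
      (p.1.1 • pointwiseApply I E E ((fderivMap v hv).comp p.2) (speedVariation v p.2) +
        v.comp p.2) = speedVariation v p.2 := by
    refine primitive_eq_of_hasDerivAt (zero_smul ℝ _) fun s hs => ?_
    have hγ := hasDerivAt_of_picardDefect_eq_zero hp hs
    have hvγ := (hv.differentiable one_ne_zero _).hasFDerivAt.comp_hasDerivAt s hγ
    refine (((hasDerivAt_id s).smul hvγ).congr_of_eventuallyEq
      (IccExtend_eventuallyEq (fun τ => ?_) hs)).congr_deriv ?_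
    · simp [speedVariation]
    · simp [speedVariation, IccExtend_of_mem _ _ (Ioo_subset_Icc_self hs), smul_comm s]
  rw [fderiv_picardDefect_apply hv, sub_eq_zero]
  simpa using hprim.symm

theorem fderiv_apply_time_of_picardDefect_eq_zero [CompleteSpace E] {v : C(E, E)}
    (hv : ContDiff ℝ 1 v) {Γ : ℝ × E → C(I, E)} {q : ℝ × E} (hΓ : DifferentiableAt ℝ Γ q)
    (hzero : ∀ᶠ q' in 𝓝 q, picardDefect v (q', Γ q') = 0)
    (hinv : (fderiv ℝ (picardDefect v) (q, Γ q) ∘L .inr ℝ (ℝ × E) C(I, E)).IsInvertible) :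
    fderiv ℝ Γ q (1, 0) = speedVariation v (Γ q) := by
  set D := fderiv ℝ (picardDefect v) (q, Γ q)
  have hchain : HasFDerivAt (fun q' => picardDefect v (q', Γ q'))
      (D ∘L (ContinuousLinearMap.id ℝ (ℝ × E)).prod (fderiv ℝ Γ q)) q :=
    ((contDiff_picardDefect (n := 1) hv).differentiable one_ne_zero _).hasFDerivAt.comp q
      ((hasFDerivAt_id q).prodMk hΓ.hasFDerivAt)
  have hΓ' : D ((1, 0), fderiv ℝ Γ q (1, 0)) = 0 :=
    congrArg (· (1, 0)) (hchain.unique ((hasFDerivAt_const 0 q).congr_of_eventuallyEq hzero))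
  have hη : D ((1, 0), speedVariation v (Γ q)) = 0 :=
    fderiv_picardDefect_speedVariation hv hzero.self_of_nhds
  have hdiff : D (0, fderiv ℝ Γ q (1, 0) - speedVariation v (Γ q)) = 0 := by
    rw [← sub_eq_zero.2 (hΓ'.trans hη.symm), ← map_sub]
    simp
  exact sub_eq_zero.1 (hinv.injective (hdiff.trans (map_zero _).symm))

/-- `Φ (t, x)` is a flow of the vector field `v`, of class `C^n`, near time `0` and the point
`x₀`. -/
structure IsLocalFlowAt (n : WithTop ℕ∞) (v : E → E) (Φ : ℝ × E → E) (x₀ : E) : Prop where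
  eventually_contDiffAt : ∀ᶠ q in 𝓝 (0, x₀), ContDiffAt ℝ n Φ q
  eventually_hasDerivAt : ∀ᶠ q in 𝓝 (0, x₀), HasDerivAt (fun t => Φ (t, q.2)) (v (Φ q)) q.1
  eventually_apply_zero : ∀ᶠ x in 𝓝 x₀, Φ (0, x) = x

theorem IsLocalFlowAt.eventually_fderiv_apply_time {n : WithTop ℕ∞} {v : E → E} {Φ : ℝ × E → E}
    {x₀ : E} (hΦ : IsLocalFlowAt n v Φ x₀) (hn : n ≠ 0) :
    ∀ᶠ q in 𝓝 (0, x₀), fderiv ℝ Φ q (1, 0) = v (Φ q) := by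
  filter_upwards [hΦ.eventually_contDiffAt, hΦ.eventually_hasDerivAt] with q hq hderiv
  have hline : HasDerivAt (fun t => (t, q.2)) ((1 : ℝ), (0 : E)) q.1 :=
    (hasDerivAt_id _).prodMk (hasDerivAt_const _ _)
  exact ((hq.differentiableAt hn).hasFDerivAt.comp_hasDerivAt q.1 hline).unique hderiv

theorem IsLocalFlowAt.fderiv_apply_space {n : WithTop ℕ∞} {v : E → E} {Φ : ℝ × E → E}
    {x₀ : E} (hΦ : IsLocalFlowAt n v Φ x₀) (hn : n ≠ 0) (w : E) :
    fderiv ℝ Φ (0, x₀) (0, w) = w := by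
  have hcomp := (hΦ.eventually_contDiffAt.self_of_nhds.differentiableAt hn).hasFDerivAt.comp x₀
    ((hasFDerivAt_const (𝕜 := ℝ) (0 : ℝ) x₀).prodMk (hasFDerivAt_id x₀))
  exact congrArg (· w) (hcomp.unique ((hasFDerivAt_id x₀).congr_of_eventuallyEq
    hΦ.eventually_apply_zero))

theorem exists_isLocalFlowAt [CompleteSpace E] {n : ℕ∞} (hn : n ≠ 0) {v : C(E, E)}
    (hv : ContDiff ℝ n v) (x₀ : E) : ∃ Φ : ℝ × E → E, IsLocalFlowAt n v Φ x₀ := by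
  have hn' : (n : WithTop ℕ∞) ≠ 0 := mod_cast hn
  have hv₁ : ContDiff ℝ 1 v := hv.of_le (mod_cast Order.one_le_iff_ne_zero.2 hn)
  obtain ⟨Γ, -, hΓ⟩ := exists_implicitFunction_eventually_contDiffAt hn'
    (u := ((0, x₀), ContinuousLinearMap.const ℝ I x₀))
    (.of_forall fun _ => (contDiff_picardDefect hv).contDiffAt)
    (fderiv_picardDefect_comp_inr hv₁ x₀ _ ▸
      ContinuousLinearMap.isInvertible_equiv (f := .refl ℝ _))
  have hdefect₀ : picardDefect v ((0, x₀), ContinuousLinearMap.const ℝ I x₀) = 0 := by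
    simp [picardDefect]
  rw [hdefect₀] at hΓ
  let ev : C(I, E) →L[ℝ] E := ContinuousMap.evalCLM ℝ 1
  refine ⟨fun q => ev (Γ q), ?_, ?_, ?_⟩
  · exact hΓ.mono fun q hq => ev.contDiff.contDiffAt.comp q hq.1
  · filter_upwards [hΓ.eventually_nhds] with q hq
    obtain ⟨hdiff, -, hinv⟩ := hq.self_of_nhds
    have hΓq := hdiff.differentiableAt hn'
    have hline : HasDerivAt (fun t => (t, q.2)) ((1 : ℝ), (0 : E)) q.1 :=
      (hasDerivAt_id _).prodMk (hasDerivAt_const _ _)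
    have htime : HasDerivAt (fun t => ev (Γ (t, q.2))) (ev (fderiv ℝ Γ q (1, 0))) q.1 :=
      ev.hasFDerivAt.comp_hasDerivAt q.1 (hΓq.hasFDerivAt.comp_hasDerivAt q.1 hline)
    rw [fderiv_apply_time_of_picardDefect_eq_zero hv₁ hΓq (hq.mono fun _ h => h.2.1) hinv]
      at htime
    simpa [speedVariation, ev] using htime
  · have hx : Tendsto (fun x : E => ((0 : ℝ), x)) (𝓝 x₀) (𝓝 (0, x₀)) :=
      (Continuous.prodMk_right (0 : ℝ)).tendsto x₀
    filter_upwards [hx.eventually hΓ] with x hx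
    have hΓx : Γ (0, x) = ContinuousLinearMap.const ℝ I x := by
      simpa [picardDefect, sub_eq_zero] using hx.2.1
    simp [hΓx, ev]

end Flow

section Straightening

variable {E : Type*} [NormedAddCommGroup E] [NormedSpace ℝ E] {x₀ : E}

-- The inverse of `ψ` flows the points of a hyperplane transverse to `v x₀` along `v`.
theorem IsLocalFlowAt.exists_straightening [CompleteSpace E] {n : WithTop ℕ∞} (hn : n ≠ 0)
    {v : E → E} (hv₀ : v x₀ ≠ 0) {Φ : ℝ × E → E} (hΦ : IsLocalFlowAt n v Φ x₀) :
    ∃ ψ : E → E, ∀ᶠ x in 𝓝 x₀, ContDiffAt ℝ n ψ x ∧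
      ∃ B : E ≃L[ℝ] E, HasFDerivAt ψ (B : E →L[ℝ] E) x ∧ B (v x) = v x₀ := by
  obtain ⟨ℓ, hℓ⟩ := SeparatingDual.exists_eq_one (R := ℝ) hv₀
  let L : E →L[ℝ] ℝ × E := ℓ.prod (.id ℝ E - ℓ.smulRight (v x₀))
  have hL (w : E) : L w = ℓ w • (1, 0) + (0, w - ℓ w • v x₀) := by simp [L]
  have hLv : L (v x₀) = (1, 0) := by simp [L, hℓ]
  let Ψ (z : E) : E := Φ ((0, x₀) + L z)
  have hbase : Tendsto (fun z => (0, x₀) + L z) (𝓝 0) (𝓝 (0, x₀)) := by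
    have hcont : Continuous fun z => (0, x₀) + L z := by fun_prop
    simpa using hcont.tendsto 0
  have hΨ (z : E) (hz : ContDiffAt ℝ n Φ ((0, x₀) + L z)) :
      HasFDerivAt Ψ (fderiv ℝ Φ ((0, x₀) + L z) ∘L L) z :=
    (hz.differentiableAt hn).hasFDerivAt.comp z (L.hasFDerivAt.const_add _)
  have hΨ₀ : Ψ 0 = x₀ := by simpa [Ψ] using hΦ.eventually_apply_zero.self_of_nhds
  have hderiv₀ : fderiv ℝ Ψ 0 = .id ℝ E := by
    ext w
    have htime := (hΦ.eventually_fderiv_apply_time hn).self_of_nhds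
    rw [hΦ.eventually_apply_zero.self_of_nhds] at htime
    rw [(hΨ 0 (hbase.eventually hΦ.eventually_contDiffAt).self_of_nhds).fderiv,
      ContinuousLinearMap.comp_apply, map_zero, add_zero, hL, map_add, map_smul, htime,
      hΦ.fderiv_apply_space hn, add_sub_cancel, ContinuousLinearMap.id_apply]
  have hsmooth : ∀ᶠ z in 𝓝 0, ContDiffAt ℝ n Ψ z :=
    (hbase.eventually hΦ.eventually_contDiffAt).mono fun z hz =>
      hz.comp z (contDiff_const.add L.contDiff).contDiffAt
  have hflow : ∀ᶠ z in 𝓝 0, fderiv ℝ Ψ z (v x₀) = v (Ψ z) := by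
    filter_upwards [hbase.eventually hΦ.eventually_contDiffAt,
      hbase.eventually (hΦ.eventually_fderiv_apply_time hn)] with z hz htime
    rwa [(hΨ z hz).fderiv, ContinuousLinearMap.comp_apply, hLv]
  obtain ⟨ψ, hψ₀, hψ⟩ := exists_localInverse_eventually_contDiffAt hn hsmooth
    (hderiv₀ ▸ ContinuousLinearMap.isInvertible_equiv (f := .refl ℝ E))
  rw [hΨ₀] at hψ₀ hψ
  refine ⟨ψ, ?_⟩
  filter_upwards [hψ, hψ₀.eventually hflow] with x ⟨hψx, hΨψ, A, hA, hAsymm⟩ hx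
  refine ⟨hψx, A.symm, hAsymm, ?_⟩
  rw [hA.fderiv, hΨψ] at hx
  exact A.symm_apply_eq.2 hx.symm

theorem exists_contDiff_eventuallyEq [HasContDiffBump E] {F : Type*} [NormedAddCommGroup F]
    [NormedSpace ℝ F] {n : ℕ∞} {f : E → F} (hf : ∀ᶠ x in 𝓝 x₀, ContDiffAt ℝ n f x) :
    ∃ g : E → F, ContDiff ℝ n g ∧ g =ᶠ[𝓝 x₀] f := by
  obtain ⟨r, hr, hfr⟩ := Metric.nhds_basis_closedBall.eventually_iff.1 hf
  let χ : ContDiffBump x₀ := ⟨r / 2, r, half_pos hr, half_lt_self hr⟩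
  refine ⟨fun x => χ x • f x, contDiff_iff_contDiffAt.2 fun x => ?_,
    χ.eventuallyEq_one.mono fun x hx => by simp [hx]⟩
  by_cases hx : x ∈ tsupport χ
  · exact χ.contDiffAt.smul (hfr (χ.tsupport_eq ▸ hx))
  · refine (contDiffAt_const (c := 0)).congr_of_eventuallyEq ?_
    filter_upwards [notMem_tsupport_iff_eventuallyEq.1 hx] with y hy
    simp [hy]

theorem exists_straightening [CompleteSpace E] [HasContDiffBump E] {n : ℕ∞} (hn : n ≠ 0)
    {v : E → E} (hv : ∀ᶠ x in 𝓝 x₀, ContDiffAt ℝ n v x) (hv₀ : v x₀ ≠ 0) :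
    ∃ ψ : E → E, ∀ᶠ x in 𝓝 x₀, ContDiffAt ℝ n ψ x ∧
      ∃ B : E ≃L[ℝ] E, HasFDerivAt ψ (B : E →L[ℝ] E) x ∧ B (v x) = v x₀ := by
  obtain ⟨w, hw, hwv⟩ := exists_contDiff_eventuallyEq hv
  obtain ⟨Φ, hΦ⟩ := exists_isLocalFlowAt hn (v := ⟨w, hw.continuous⟩) hw x₀
  have hw₀ : w x₀ ≠ 0 := by rwa [hwv.self_of_nhds]
  obtain ⟨ψ, hψ⟩ := hΦ.exists_straightening (v := w) (mod_cast hn) hw₀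
  refine ⟨ψ, ?_⟩
  filter_upwards [hψ, hwv] with x ⟨hψx, B, hB, hBv⟩ hx
  exact ⟨hψx, B, hB, by simpa [hx, hwv.self_of_nhds] using hBv⟩

end Straightening

section FirstIntegrals

theorem exists_linearIndependent_dual_apply_eq_zero {K V : Type*} [Field K] [AddCommGroup V]
    [Module K V] [FiniteDimensional K V] {d : ℕ} (hd : d < Module.finrank K V) (e : V) :
    ∃ ℓ : Fin d → Module.Dual K V, LinearIndependent K ℓ ∧ ∀ i, ℓ i e = 0 := by
  let W := Submodule.span K {e}
  have hW : Module.finrank K W ≤ 1 := by simpa using finrank_span_le_card (R := K) {e}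
  have hrank : d ≤ Module.finrank K (Module.Dual K (V ⧸ W)) := by
    rw [Subspace.dual_finrank_eq]
    have := W.finrank_quotient_add_finrank
    lia
  obtain ⟨ℓ, hℓ⟩ := exists_linearIndependent_of_le_finrank hrank
  refine ⟨fun i => ℓ i ∘ₗ W.mkQ, hℓ.map_injOn W.mkQ.dualMap
    (LinearMap.dualMap_injective_of_surjective W.mkQ_surjective).injOn, fun i => ?_⟩
  have he : W.mkQ e = 0 := (Submodule.Quotient.mk_eq_zero W).2 (Submodule.mem_span_singleton_self e)
  rw [LinearMap.comp_apply, he, map_zero]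

theorem exists_linearIndependent_firstIntegrals {E : Type*} [NormedAddCommGroup E]
    [NormedSpace ℝ E] [FiniteDimensional ℝ E] {n : ℕ∞} (hn : n ≠ 0) {v : E → E} {x₀ : E}
    (hv : ∀ᶠ x in 𝓝 x₀, ContDiffAt ℝ n v x) (hv₀ : v x₀ ≠ 0) {d : ℕ}
    (hd : d < Module.finrank ℝ E) :
    ∃ f : Fin d → E → ℝ, ∀ᶠ x in 𝓝 x₀, (∀ i, ContDiffAt ℝ n (f i) x) ∧
      (∀ i, fderiv ℝ (f i) x (v x) = 0) ∧ LinearIndependent ℝ fun i => fderiv ℝ (f i) x := by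
  have := FiniteDimensional.complete ℝ E
  obtain ⟨ψ, hψ⟩ := exists_straightening hn hv hv₀
  obtain ⟨ℓ, hℓ, hℓv⟩ := exists_linearIndependent_dual_apply_eq_zero hd (v x₀)
  let ℓ' (i : Fin d) : E →L[ℝ] ℝ := (ℓ i).toContinuousLinearMap
  have hℓ' : LinearIndependent ℝ ℓ' :=
    hℓ.map' LinearMap.toContinuousLinearMap.toLinearMap (LinearEquiv.ker _)
  refine ⟨fun i x => ℓ' i (ψ x), hψ.mono fun x ⟨hψx, B, hB, hBv⟩ => ?_⟩
  have hfderiv (i : Fin d) : fderiv ℝ (fun x => ℓ' i (ψ x)) x = ℓ' i ∘L B :=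
    ((ℓ' i).hasFDerivAt.comp x hB).fderiv
  refine ⟨fun i => (ℓ' i).contDiff.contDiffAt.comp x hψx, fun i => ?_, ?_⟩
  · rw [hfderiv, ContinuousLinearMap.comp_apply, ContinuousLinearEquiv.coe_coe, hBv]
    exact hℓv i
  · simp only [hfderiv]
    exact hℓ'.map' (B.symm.arrowCongr (.refl ℝ ℝ)).toLinearEquiv.toLinearMap (LinearEquiv.ker _)

end FirstIntegrals

section VectorCalculus

open InnerProductSpace
open scoped Gradient

theorem dot_eq_inner (u w : E3) : dot u w = inner ℝ u w := by
  simp [dot, PiLp.inner_apply, mul_comm]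

theorem grad_apply (f : E3 → ℝ) (x : E3) (i : Fin 3) : grad f x i = pd i f x := by
  fin_cases i <;> rfl

theorem grad_eq_gradient (f : E3 → ℝ) : grad f = ∇ f := by
  ext x i
  have h : inner ℝ (∇ f x) (EuclideanSpace.single i (1 : ℝ)) = pd i f x := by
    rw [← toDual_apply_apply, toDual_gradient, pd]
  rw [grad_apply, ← h, EuclideanSpace.inner_single_right]
  simp

theorem dot_grad (f : E3 → ℝ) (x u : E3) : dot (grad f x) u = fderiv ℝ f x u := by
  rw [dot_eq_inner, grad_eq_gradient, ← toDual_apply_apply, toDual_gradient]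

theorem contDiffAt_grad {m n : WithTop ℕ∞} {f : E3 → ℝ} {x : E3} (hf : ContDiffAt ℝ n f x)
    (hmn : m + 1 ≤ n) : ContDiffAt ℝ m (grad f) x := by
  rw [grad_eq_gradient]
  exact (toDual ℝ E3).symm.contDiff.contDiffAt.comp x (hf.fderiv_right hmn)

theorem linearIndependent_grad {ι : Type*} {f : ι → E3 → ℝ} {x : E3}
    (hf : LinearIndependent ℝ fun i => fderiv ℝ (f i) x) :
    LinearIndependent ℝ fun i => grad (f i) x := by
  simp only [grad_eq_gradient]
  exact hf.map' (toDual ℝ E3).symm.toLinearEquiv.toLinearMap (LinearEquiv.ker _)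

theorem curl_grad {f : E3 → ℝ} {x : E3} (hf : ContDiffAt ℝ 2 f x) : curl (grad f) x = 0 := by
  have hdiff : DifferentiableAt ℝ (fderiv ℝ f) x :=
    (hf.fderiv_right (m := 1) (by norm_num)).differentiableAt one_ne_zero
  have hpd (i j : Fin 3) : pd i (fun y => grad f y j) x =
      fderiv ℝ (fderiv ℝ f) x (EuclideanSpace.single i 1) (EuclideanSpace.single j 1) := by
    have happly := hdiff.hasFDerivAt.clm_apply
      (hasFDerivAt_const (EuclideanSpace.single j (1 : ℝ)) x)
    simp only [grad_apply]
    rw [pd, show pd j f = fun y => fderiv ℝ f y (EuclideanSpace.single j 1) from rfl, happly.fderiv]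
    simp
  have hsymm : IsSymmSndFDerivAt ℝ f x :=
    hf.isSymmSndFDerivAt minSmoothness_of_isRCLikeNormedField.le
  have hcross (i j : Fin 3) : pd i (fun y => grad f y j) x - pd j (fun y => grad f y i) x = 0 := by
    rw [hpd, hpd, hsymm.eq, sub_self]
  ext k
  fin_cases k
  exacts [hcross 1 2, hcross 2 0, hcross 0 1]

theorem dot_curl_grad (u : E3) {f : E3 → ℝ} {x : E3} (hf : ContDiffAt ℝ 2 f x) :
    dot u (curl (grad f) x) = 0 := by
  simp [curl_grad hf, dot]

end VectorCalculus

theorem local_bihamiltonian_structure_general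
    {U : Set E3} (hU : IsOpen U) {v : E3 → E3} (hv : ContDiffOn ℝ (⊤ : ℕ∞) v U)
    {x₀ : E3} (hx₀ : x₀ ∈ U) (hv₀ : v x₀ ≠ 0) :
    ∃ V : Set E3, IsOpen V ∧ x₀ ∈ V ∧ V ⊆ U ∧
      ∃ J₁ J₂ : E3 → E3,
        ContDiffOn ℝ (⊤ : ℕ∞) J₁ V ∧ ContDiffOn ℝ (⊤ : ℕ∞) J₂ V ∧
        (∀ x ∈ V, LinearIndependent ℝ ![J₁ x, J₂ x]) ∧
        (∀ x ∈ V, dot (J₁ x) (v x) = 0) ∧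
        (∀ x ∈ V, dot (J₂ x) (v x) = 0) ∧
        (∀ x ∈ V, dot (J₁ x) (curl J₁ x) = 0) ∧
        (∀ x ∈ V, dot (J₂ x) (curl J₂ x) = 0) ∧
        (∀ x ∈ V, dot (J₁ x) (curl J₂ x) + dot (J₂ x) (curl J₁ x) = 0) := by
  have hsmooth : ∀ᶠ x in 𝓝 x₀, ContDiffAt ℝ (⊤ : ℕ∞) v x :=
    eventually_of_mem (hU.mem_nhds hx₀) fun x hx => hv.contDiffAt (hU.mem_nhds hx)
  obtain ⟨f, hf⟩ := exists_linearIndependent_firstIntegrals (d := 2) (by simp) hsmooth hv₀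
    (by simp)
  obtain ⟨V, hVf, hV, hx₀V⟩ := eventually_nhds_iff.1 (hf.and (hU.mem_nhds hx₀))
  have hJ (i : Fin 2) : ContDiffOn ℝ (⊤ : ℕ∞) (grad (f i)) V := fun x hx =>
    (contDiffAt_grad ((hVf x hx).1.1 i) (by simp)).contDiffWithinAt
  have horth (i : Fin 2) (x : E3) (hx : x ∈ V) : dot (grad (f i) x) (v x) = 0 :=
    (dot_grad (f i) x (v x)).trans ((hVf x hx).1.2.1 i)
  have hcurl (i j : Fin 2) (x : E3) (hx : x ∈ V) : dot (grad (f i) x) (curl (grad (f j)) x) = 0 :=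
    dot_curl_grad _ (contDiffAt_infty.1 ((hVf x hx).1.1 j) 2)
  refine ⟨V, hV, hx₀V, fun x hx => (hVf x hx).2, grad (f 0), grad (f 1), hJ 0, hJ 1,
    fun x hx => ?_, horth 0, horth 1, hcurl 0 0, hcurl 1 1,
    fun x hx => by rw [hcurl 0 1 x hx, hcurl 1 0 x hx, add_zero]⟩
  convert linearIndependent_grad (hVf x hx).1.2.2 using 1
  exact funext fun i => by fin_cases i <;> rfl

/-- every vector field admitting a smooth Serret–Frenet frame
locally possesses two compatible, pointwise linearly independent Poisson
vectors orthogonal to it. -/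
theorem local_bihamiltonian_structure
    (U : Set E3) (hU : IsOpen U) (v t n b : E3 → E3)
    (hv : ContDiffOn ℝ (⊤ : ℕ∞) v U) (hv0 : ∀ x ∈ U, v x ≠ 0)
    (hframe : IsFrameOn t n b U)
    (ht : ∀ x ∈ U, t x = ‖v x‖⁻¹ • v x) :
    ∀ x₀ ∈ U, ∃ V : Set E3, IsOpen V ∧ x₀ ∈ V ∧ V ⊆ U ∧
      ∃ J₁ J₂ : E3 → E3,
        ContDiffOn ℝ (⊤ : ℕ∞) J₁ V ∧ ContDiffOn ℝ (⊤ : ℕ∞) J₂ V ∧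
        (∀ x ∈ V, LinearIndependent ℝ ![J₁ x, J₂ x]) ∧
        (∀ x ∈ V, dot (J₁ x) (v x) = 0) ∧
        (∀ x ∈ V, dot (J₂ x) (v x) = 0) ∧
        (∀ x ∈ V, dot (J₁ x) (curl J₁ x) = 0) ∧
        (∀ x ∈ V, dot (J₂ x) (curl J₂ x) = 0) ∧
        (∀ x ∈ V, dot (J₁ x) (curl J₂ x) + dot (J₂ x) (curl J₁ x) = 0) :=
  fun _ hx₀ => local_bihamiltonian_structure_general hU hv hx₀ (hv0 _ hx₀)
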